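/- arXiv:1301.7528 — 2 statements merged into one kernel-verified Lean document; each statement's English description precedes it below -/
import Mathlib

section
/- Let λ be a cardinal ≥ ω₂ and assume SSR(λ). Then for every weakly full stationary X ⊆ [λ]^ω there exists I ⊆ λ with |I| = ℵ₁ and ω₁ ⊆ I such that X ∩ [J]^ω is stationary in [J]^ω for every J ⊆ λ with I ⊆ J and sup⁺(J) = sup⁺(I). -/
open Set Cardinal Ordinal

noncomputable section

def omega1 : Ordinal.{0} := (aleph 1).ord
def omega2 : Ordinal.{0} := (aleph 2).ord

/-- `[A]^ω`: countably infinite subsets of `A`. -/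
def sOmega {α : Type*} (A : Set α) : Set (Set α) :=
  {x | x ⊆ A ∧ x.Countable ∧ x.Infinite}

/-- club subsets of `[A]^ω`. -/
def IsClubOmega {α : Type*} (A : Set α) (C : Set (Set α)) : Prop :=
  C ⊆ sOmega A ∧ (∀ x ∈ sOmega A, ∃ y ∈ C, x ⊆ y) ∧
    ∀ f : ℕ → Set α, (∀ n, f n ∈ C) → (∀ n, f n ⊆ f (n + 1)) → (⋃ n, f n) ∈ C

/-- stationary subsets of `[A]^ω`. -/
def IsStationaryOmega {α : Type*} (A : Set α) (S : Set (Set α)) : Prop :=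
  ∀ C, IsClubOmega A C → (S ∩ C).Nonempty

/-- `x ⊑ y` : `y` is an `ω₁`-extension of `x`. -/
def sqsubseteq (x y : Set Ordinal) : Prop :=
  x ⊆ y ∧ x ∩ Iio omega1 = y ∩ Iio omega1

/-- `S ⊆ [λ]^ω` is full if it is closed under `ω₁`-extensions. -/
def IsFull (lam : Ordinal) (S : Set (Set Ordinal)) : Prop :=
  ∀ x ∈ S, ∀ y ∈ sOmega (Iio lam), sqsubseteq x y → y ∈ S

/-- The semi-stationary reflection principle at `λ`. -/
def SSR (lam : Ordinal) : Prop :=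
  ∀ S : Set (Set Ordinal), S ⊆ sOmega (Iio lam) → IsFull lam S →
    IsStationaryOmega (Iio lam) S →
      ∃ I : Set Ordinal, I ⊆ Iio lam ∧ Iio omega1 ⊆ I ∧ #I = aleph 1 ∧
        IsStationaryOmega I (S ∩ sOmega I)

/-- `sup⁺(x) = sup {α + 1 : α ∈ x}`. -/
def supPlus (x : Set Ordinal) : Ordinal := sSup ((· + 1) '' x)

/-- `x ⊑* y`. -/
def sqsubseteqStar (lam : Ordinal) (x y : Set Ordinal) : Prop :=
  sqsubseteq x y ∧ supPlus x = supPlus y ∧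
    ∀ γ ∈ x, γ < lam → γ.cof = aleph 1 → supPlus (x ∩ Iio γ) = supPlus (y ∩ Iio γ)

/-- `X ⊆ [λ]^ω` is weakly full if it is upward closed under `⊑*`. -/
def IsWeaklyFull (lam : Ordinal) (X : Set (Set Ordinal)) : Prop :=
  ∀ x ∈ X, ∀ y ∈ sOmega (Iio lam), sqsubseteqStar lam x y → y ∈ X

/-!
Call the set of all countable `ω₁`-extensions of members of `X` the full hull of `X`. `SSR` applies
to the full hull, but a witness `x ∈ X` below a member `z` of the hull may have `sup⁺ x < sup⁺ z`.
Choosing a reflection point `I` of the hull with `sup⁺ I` least removes this defect: no proper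
initial segment of `I` is a reflection point, so by a diagonal intersection the traces `z ∩ α` with
`ω₁ ≤ α ∈ z` can be kept out of the hull for stationarily many `z`, which forces `sup⁺ x = sup⁺ z`.

For the suprema below ordinals `γ` of cofinality `ω₁`, fix cofinal maps `c γ : ω₁ → γ`. If `x` and
`y` are sufficiently closed with respect to `c`, then `sup⁺ (x ∩ γ)` and `sup⁺ (y ∩ γ)` are both
determined by the same set `x ∩ ω₁ = y ∩ ω₁`, so `x ⊑ y` and `sup⁺ x = sup⁺ y` already give
`x ⊑* y`. Stationarity passes from `I` to a larger `J` because every element of a finitary closure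
is generated by finitely many elements, and `sup⁺ J = sup⁺ I` makes `y ∩ I` cofinal in `y` for
almost all `y ∈ [J]^ω`.
-/

section Operations

variable {α : Type*} {A B x y : Set α} {S T : Set (Set α)} {F : List α → Set α}

/-- `x` is closed in `A` under the finitary set-valued operation `F`. Values of `F` outside `A` are
ignored, so that a single `F` can be used for all subsets of a given set. -/
def IsClosedUnder (A : Set α) (F : List α → Set α) (x : Set α) : Prop :=
  ∀ l : List α, (∀ a ∈ l, a ∈ x) → F l ∩ A ⊆ x

lemma isClosedUnder_self : IsClosedUnder A F A := fun _ _ => inter_subset_right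

lemma exists_forall_mem_of_directed {ι : Type*} [Nonempty ι] {f : ι → Set α}
    (hf : Directed (· ⊆ ·) f) {l : List α} (hl : ∀ a ∈ l, a ∈ ⋃ i, f i) :
    ∃ i, ∀ a ∈ l, a ∈ f i := by
  have hl' : (l.finite_toSet.toFinset : Set α) ⊆ ⋃ i, f i := by simpa [subset_def] using hl
  simpa [subset_def] using hf.exists_mem_subset_of_finset_subset_biUnion hl'

lemma isClosedUnder_iUnion_of_directed {ι : Type*} [Nonempty ι] {f : ι → Set α}
    (hf : Directed (· ⊆ ·) f) (h : ∀ i, IsClosedUnder A F (f i)) :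
    IsClosedUnder A F (⋃ i, f i) := fun l hl =>
  let ⟨i, hi⟩ := exists_forall_mem_of_directed hf hl
  (h i l hi).trans (subset_iUnion f i)

lemma isClosedUnder_sInter (h : ∀ x ∈ S, IsClosedUnder A F x) : IsClosedUnder A F (⋂₀ S) :=
  fun l hl => subset_sInter fun x hx => h x hx l fun a ha => hl a ha x hx

/-- The closure of a set in `A` under the finitary set-valued operation `F`, which lets Mathlib's
theory of closure operators be applied to `IsClosedUnder`. -/
def closureUnder (A : Set α) (F : List α → Set α) : ClosureOperator (Set α) :=
  .ofCompletePred (IsClosedUnder A F) fun _ => isClosedUnder_sInter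

lemma isClosedUnder_closureUnder : IsClosedUnder A F (closureUnder A F x) :=
  (closureUnder A F).isClosed_closure x

lemma closureUnder_subset (hxy : x ⊆ y) (hy : IsClosedUnder A F y) : closureUnder A F x ⊆ y :=
  (closureUnder A F).closure_min hxy hy

lemma countable_setOf_list (hx : x.Countable) : {l : List α | ∀ a ∈ l, a ∈ x}.Countable := by
  have := hx.to_subtype
  rw [← range_list_map_coe]
  exact countable_range _

lemma exists_countable_isClosedUnder (hF : ∀ l, (F l).Countable) (hx : x.Countable) :
    ∃ y, x ⊆ y ∧ y.Countable ∧ IsClosedUnder A F y := by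
  let step : Set α → Set α := fun y => y ∪ ⋃ l ∈ {l : List α | ∀ a ∈ l, a ∈ y}, F l
  have step_succ (n : ℕ) : step^[n + 1] x = step (step^[n] x) := Function.iterate_succ_apply' ..
  have hmono : Monotone fun n => step^[n] x :=
    monotone_nat_of_le_succ fun n => (step_succ n).symm ▸ subset_union_left
  have hcount (n : ℕ) : (step^[n] x).Countable := by
    induction n with
    | zero => exact hx
    | succ n ih =>
      rw [step_succ]
      exact ih.union ((countable_setOf_list ih).biUnion fun l _ => hF l)
  refine ⟨⋃ n, step^[n] x, subset_iUnion (fun n => step^[n] x) 0, countable_iUnion hcount,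
    fun l hl b hb => ?_⟩
  obtain ⟨n, hn⟩ := exists_forall_mem_of_directed hmono.directed_le hl
  refine mem_iUnion.2 ⟨n + 1, ?_⟩
  rw [step_succ]
  exact Or.inr (mem_biUnion hn hb.1)

lemma countable_closureUnder (hF : ∀ l, (F l).Countable) (hx : x.Countable) :
    (closureUnder A F x).Countable :=
  let ⟨_, hxy, hy, hcl⟩ := exists_countable_isClosedUnder hF hx
  hy.mono (closureUnder_subset hxy hcl)

lemma closureUnder_mem_sOmega (hF : ∀ l, (F l).Countable) (hx : x ∈ sOmega A) :
    closureUnder A F x ∈ sOmega A :=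
  ⟨closureUnder_subset hx.1 isClosedUnder_self, countable_closureUnder hF hx.2.1,
    hx.2.2.mono ((closureUnder A F).le_closure x)⟩

lemma exists_list_of_mem_closureUnder {a : α} (ha : a ∈ closureUnder A F x) :
    ∃ l : List α, (∀ b ∈ l, b ∈ x) ∧ a ∈ closureUnder A F {b | b ∈ l} := by
  let f : {l : List α // ∀ b ∈ l, b ∈ x} → Set α := fun l => closureUnder A F {b | b ∈ l.1}
  have : Nonempty {l : List α // ∀ b ∈ l, b ∈ x} := ⟨⟨[], by simp⟩⟩
  have hf : Directed (· ⊆ ·) f := fun l m =>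
    ⟨⟨l.1 ++ m.1, by simpa [or_imp, forall_and] using ⟨l.2, m.2⟩⟩,
      (closureUnder A F).monotone fun b (hb : b ∈ l.1) => List.mem_append_left _ hb,
      (closureUnder A F).monotone fun b (hb : b ∈ m.1) => List.mem_append_right _ hb⟩
  have hxf : x ⊆ ⋃ l, f l := fun b hb =>
    mem_iUnion.2 ⟨⟨[b], by simpa using hb⟩, (closureUnder A F).le_closure _ (by simp)⟩
  have hcl := isClosedUnder_iUnion_of_directed hf fun _ => isClosedUnder_closureUnder
  obtain ⟨⟨l, hl⟩, hal⟩ := mem_iUnion.1 (closureUnder_subset hxf hcl ha)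
  exact ⟨l, hl, hal⟩

lemma isClubOmega_isClosedUnder (hF : ∀ l, (F l).Countable) :
    IsClubOmega A {x | x ∈ sOmega A ∧ IsClosedUnder A F x} := by
  refine ⟨fun x hx => hx.1, fun x hx => ?_, fun f hf hsucc => ⟨⟨?_, ?_, ?_⟩, ?_⟩⟩
  · exact ⟨closureUnder A F x, ⟨closureUnder_mem_sOmega hF hx, isClosedUnder_closureUnder⟩,
      (closureUnder A F).le_closure x⟩
  · exact iUnion_subset fun n => (hf n).1.1
  · exact countable_iUnion fun n => (hf n).1.2.1
  · exact (hf 0).1.2.2.mono (subset_iUnion f 0)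
  · exact isClosedUnder_iUnion_of_directed (monotone_nat_of_le_succ hsucc).directed_le
      fun n => (hf n).2

lemma sOmega_nonempty (hA : A.Infinite) : (sOmega A).Nonempty := by
  have := hA.to_subtype
  let g := Infinite.natEmbedding A
  refine ⟨range fun n => (g n : α), ?_, countable_range _,
    infinite_range_of_injective (Subtype.val_injective.comp g.injective)⟩
  rintro _ ⟨n, rfl⟩
  exact (g n).2

/- Starting from some `b ∈ C`, assign to each finite sequence a member of `C` that contains the
entries of the sequence and increases with it. A closed `x` is then the union of the increasing
chain assigned to the initial segments of an enumeration of `x`. -/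
lemma IsClubOmega.exists_operation {C : Set (Set α)} (hC : IsClubOmega A C) (hA : A.Infinite) :
    ∃ F : List α → Set α, (∀ l, (F l).Countable) ∧
      ∀ x ∈ sOmega A, IsClosedUnder A F x → x ∈ C := by
  have hnext (a : α) (y : C) : ∃ z : C, (y : Set α) ⊆ z ∧ (a ∈ A → a ∈ (z : Set α)) := by
    by_cases ha : a ∈ A
    · have hy := hC.1 y.2
      obtain ⟨z, hz, hyz⟩ := hC.2.1 (insert a y)
        ⟨insert_subset ha hy.1, hy.2.1.insert a, hy.2.2.mono (subset_insert a _)⟩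
      exact ⟨⟨z, hz⟩, (subset_insert a _).trans hyz, fun _ => hyz (mem_insert a _)⟩
    · exact ⟨y, Subset.rfl, fun h => absurd h ha⟩
  choose next subset_next mem_next using hnext
  obtain ⟨a, ha⟩ := sOmega_nonempty hA
  obtain ⟨b, hb, -⟩ := hC.2.1 a ha
  let G : List α → C := List.foldr next ⟨b, hb⟩
  refine ⟨fun l => G l, fun l => (hC.1 (G l).2).2.1, fun x hx hcl => ?_⟩
  obtain ⟨f, rfl⟩ := hx.2.1.exists_eq_range hx.2.2.nonempty
  let initial : ℕ → List α := Nat.rec [] fun n l => f n :: l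
  have hinitial (n : ℕ) : ∀ a ∈ initial n, a ∈ range f := by
    induction n with
    | zero => exact List.forall_mem_nil _
    | succ n ih => exact List.forall_mem_cons.2 ⟨mem_range_self n, ih⟩
  have hunion : range f = ⋃ n, (G (initial n) : Set α) := by
    refine Subset.antisymm (range_subset_iff.2 fun n => ?_) (iUnion_subset fun n a ha => ?_)
    · exact mem_iUnion.2 ⟨n + 1, mem_next (f n) _ (hx.1 (mem_range_self n))⟩
    · exact hcl (initial n) (hinitial n) ⟨ha, (hC.1 (G (initial n)).2).1 ha⟩
  rw [hunion]
  exact hC.2.2 _ (fun n => (G (initial n)).2) fun n => subset_next (f n) _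

theorem isStationaryOmega_iff :
    IsStationaryOmega A S ↔
      ∀ F : List α → Set α, (∀ l, (F l).Countable) →
        ∃ x ∈ S, x ∈ sOmega A ∧ IsClosedUnder A F x := by
  refine ⟨fun hS F hF => hS _ (isClubOmega_isClosedUnder hF), fun h C hC => ?_⟩
  obtain ⟨a, -, ha, -⟩ := h (fun _ => ∅) fun _ => countable_empty
  obtain ⟨F, hF, hFC⟩ := hC.exists_operation (ha.2.2.mono ha.1)
  obtain ⟨x, hxS, hxA, hcl⟩ := h F hF
  exact ⟨x, hxS, hFC x hxA hcl⟩

namespace IsStationaryOmega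

lemma mono (hS : IsStationaryOmega A S) (h : ∀ x ∈ S, x ∈ sOmega A → x ∈ T) :
    IsStationaryOmega A T := fun C hC =>
  let ⟨x, hxS, hxC⟩ := hS C hC
  ⟨x, h x hxS (hC.1 hxC), hxC⟩

lemma sep_isClosedUnder (hS : IsStationaryOmega A S) (hF : ∀ l, (F l).Countable) :
    IsStationaryOmega A {x ∈ S | IsClosedUnder A F x} := by
  refine isStationaryOmega_iff.2 fun G hG => ?_
  obtain ⟨x, hxS, hxA, hcl⟩ :=
    isStationaryOmega_iff.1 hS (fun l => F l ∪ G l) fun l => (hF l).union (hG l)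
  have hcl' {H : List α → Set α} (hH : ∀ l, H l ⊆ F l ∪ G l) : IsClosedUnder A H x :=
    fun l hl => (inter_subset_inter_left A (hH l)).trans (hcl l hl)
  exact ⟨x, ⟨hxS, hcl' fun _ => subset_union_left⟩, hxA, hcl' fun _ => subset_union_right⟩

lemma sep_forall_mem₂ (hS : IsStationaryOmega A S) (f : α → α → α) :
    IsStationaryOmega A {x ∈ S | ∀ a ∈ x, ∀ b ∈ x, f a b ∈ A → f a b ∈ x} := by
  have hF (l : List α) : (image2 f {a | a ∈ l} {b | b ∈ l}).Countable :=
    (l.finite_toSet.image2 f l.finite_toSet).countable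
  exact (hS.sep_isClosedUnder hF).mono fun x hx _ =>
    ⟨hx.1, fun a ha b hb hab =>
      hx.2 [a, b] (by simp [ha, hb]) ⟨mem_image2_of_mem (by simp) (by simp), hab⟩⟩

lemma lift (hS : IsStationaryOmega B S) (hBA : B ⊆ A) :
    IsStationaryOmega A {y | y ∩ B ∈ S} := by
  refine isStationaryOmega_iff.2 fun F hF => ?_
  obtain ⟨x, hxS, hxB, hcl⟩ := isStationaryOmega_iff.1 hS (fun l => closureUnder A F {a | a ∈ l})
    fun l => countable_closureUnder hF l.finite_toSet.countable
  have htrace : closureUnder A F x ∩ B = x := by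
    refine Subset.antisymm (fun a ha => ?_)
      (subset_inter ((closureUnder A F).le_closure x) hxB.1)
    obtain ⟨l, hl, hal⟩ := exists_list_of_mem_closureUnder ha.1
    exact hcl l hl ⟨hal, ha.2⟩
  exact ⟨closureUnder A F x, by rwa [mem_ofPred_eq, htrace],
    closureUnder_mem_sOmega hF ⟨hxB.1.trans hBA, hxB.2⟩, isClosedUnder_closureUnder⟩

lemma sep_inter_notMem {R : Set α} {D : α → Set α} {N : α → Set (Set α)}
    (hS : IsStationaryOmega A S) (hD : ∀ a ∈ R, D a ⊆ A)
    (hN : ∀ a ∈ R, ¬IsStationaryOmega (D a) (N a)) :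
    IsStationaryOmega A {x ∈ S | ∀ a ∈ x ∩ R, (x ∩ D a).Infinite → x ∩ D a ∉ N a} := by
  simp only [isStationaryOmega_iff, not_forall] at hN
  choose F hF hFN using hN
  let G : List α → Set α
    | [] => ∅
    | a :: l => ⋃ ha : a ∈ R, F a ha l
  have hG : ∀ l, (G l).Countable
    | [] => countable_empty
    | a :: l => countable_iUnion fun ha => hF a ha l
  refine (hS.sep_isClosedUnder hG).mono fun x ⟨hxS, hcl⟩ hxA => ⟨hxS, ?_⟩
  rintro a ⟨hax, haR⟩ hinf hxN
  refine hFN a haR ⟨x ∩ D a, hxN,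
    ⟨inter_subset_right, hxA.2.1.mono inter_subset_left, hinf⟩, fun l hl b hb => ⟨?_, hb.2⟩⟩
  exact hcl (a :: l) (List.forall_mem_cons.2 ⟨hax, fun c hc => (hl c hc).1⟩)
    ⟨mem_iUnion.2 ⟨haR, hb.1⟩, hD a haR hb.2⟩

end IsStationaryOmega

end Operations

section SupPlus

universe u

variable {x y : Set Ordinal.{u}} {a b : Ordinal.{u}}

lemma lt_supPlus (hx : BddAbove x) (ha : a ∈ x) : a < supPlus x := by
  obtain ⟨c, hc⟩ := hx
  have hbdd : BddAbove ((· + 1) '' x) :=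
    ⟨c + 1, forall_mem_image.2 fun d hd => by gcongr; exact hc hd⟩
  exact Order.add_one_le_iff.1 (le_csSup hbdd (mem_image_of_mem _ ha))

lemma supPlus_le (h : ∀ a ∈ x, a < b) : supPlus x ≤ b :=
  csSup_le' (forall_mem_image.2 fun a ha => Order.add_one_le_of_lt (h a ha))

lemma exists_le_of_lt_supPlus (h : b < supPlus x) : ∃ a ∈ x, b ≤ a := by
  contrapose! h
  exact supPlus_le h

lemma supPlus_eq_of_subset (hxy : x ⊆ y) (hy : BddAbove y) (h : ∀ b ∈ y, ∃ a ∈ x, b ≤ a) :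
    supPlus x = supPlus y := by
  refine le_antisymm (supPlus_le fun a ha => lt_supPlus hy (hxy ha)) (supPlus_le fun b hb => ?_)
  obtain ⟨a, ha, hba⟩ := h b hb
  exact hba.trans_lt (lt_supPlus (hy.mono hxy) ha)

lemma supPlus_inter_Iio_lt (hx : BddAbove x) (ha : a ∈ x) : supPlus (x ∩ Iio a) < supPlus x :=
  (supPlus_le fun _ hb => hb.2).trans_lt (lt_supPlus hx ha)

lemma IsStationaryOmega.sep_supPlus_inter_eq {I J : Set Ordinal.{u}} {S : Set (Set Ordinal.{u})}
    (hS : IsStationaryOmega J S) (hIJ : I ⊆ J) (hJ : BddAbove J) (hsup : supPlus J = supPlus I) :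
    IsStationaryOmega J {y ∈ S | supPlus (y ∩ I) = supPlus y} := by
  have hcof (b : Ordinal.{u}) (hb : b ∈ J) : ∃ a ∈ I, b ≤ a :=
    exists_le_of_lt_supPlus (hsup ▸ lt_supPlus hJ hb)
  choose! i hiI hi using hcof
  refine (hS.sep_forall_mem₂ fun b _ => i b).mono fun y ⟨hyS, hcl⟩ hyJ => ⟨hyS, ?_⟩
  refine supPlus_eq_of_subset inter_subset_left (hJ.mono hyJ.1) fun b hb => ?_
  have hbI : i b ∈ I := hiI b (hyJ.1 hb)
  exact ⟨i b, ⟨hcl b hb b hb (hIJ hbI), hbI⟩, hi b (hyJ.1 hb)⟩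

end SupPlus

section FullHull

variable {lam : Ordinal.{0}} {I x y z : Set Ordinal.{0}} {Y : Set (Set Ordinal.{0})}

lemma sqsubseteq.refl (x : Set Ordinal.{0}) : sqsubseteq x x := ⟨Subset.rfl, rfl⟩

lemma sqsubseteq.trans (hxy : sqsubseteq x y) (hyz : sqsubseteq y z) : sqsubseteq x z :=
  ⟨hxy.1.trans hyz.1, hxy.2.trans hyz.2⟩

lemma sqsubseteq.of_inter (h : sqsubseteq x (y ∩ I)) (hI : Iio omega1 ⊆ I) : sqsubseteq x y :=
  ⟨h.1.trans inter_subset_left, by rw [h.2, inter_assoc, inter_eq_right.2 hI]⟩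

lemma sqsubseteq.inter (h : sqsubseteq x y) (hxI : x ⊆ I) (hI : Iio omega1 ⊆ I) :
    sqsubseteq x (y ∩ I) :=
  ⟨subset_inter h.1 hxI, by rw [h.2, inter_assoc, inter_eq_right.2 hI]⟩

/-- The full hull of `Y`: all `ω₁`-extensions in `[lam]^ω` of members of `Y`. For `Y ⊆ [lam]^ω` it
is the least full set containing `Y`, hence the set to which `SSR lam` is applied. -/
def fullHull (lam : Ordinal.{0}) (Y : Set (Set Ordinal.{0})) : Set (Set Ordinal.{0}) :=
  {y ∈ sOmega (Iio lam) | ∃ x ∈ Y, sqsubseteq x y}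

lemma isFull_fullHull : IsFull lam (fullHull lam Y) :=
  fun _ ⟨_, w, hw, hwx⟩ _ hy hxy => ⟨hy, w, hw, hwx.trans hxy⟩

lemma isStationaryOmega_fullHull (hY : IsStationaryOmega (Iio lam) Y) :
    IsStationaryOmega (Iio lam) (fullHull lam Y) :=
  hY.mono fun x hx hxlam => ⟨hxlam, x, hx, .refl x⟩

lemma sqsubseteq.supPlus_eq (h : sqsubseteq x y) (hy : BddAbove y)
    (hseg : ∀ α ∈ y, omega1 ≤ α → ¬sqsubseteq x (y ∩ Iio α)) : supPlus x = supPlus y := by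
  refine supPlus_eq_of_subset h.1 hy fun α hα => ?_
  by_contra! hlt
  have hα1 : omega1 ≤ α := by
    by_contra! hα1
    have hαx : α ∈ x ∩ Iio omega1 := h.2 ▸ ⟨hα, hα1⟩
    exact (hlt α hαx.1).false
  exact hseg α hα hα1 (h.inter hlt (Iio_subset_Iio hα1))

end FullHull

section Reflection

variable {lam α : Ordinal.{0}} {I : Set Ordinal.{0}} {S Y : Set (Set Ordinal.{0})}

/-- `I` is a reflection point of `S ⊆ [lam]^ω` as provided by `SSR lam`. -/
def ReflectsTo (lam : Ordinal.{0}) (S : Set (Set Ordinal.{0})) (I : Set Ordinal.{0}) : Prop :=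
  I ⊆ Iio lam ∧ Iio omega1 ⊆ I ∧ #I = aleph 1 ∧ IsStationaryOmega I (S ∩ sOmega I)

lemma mk_Iio_omega1 : #(Iio omega1) = aleph 1 := by
  simp [omega1, Cardinal.mk_Iio_ordinal]

lemma ReflectsTo.inter_Iio (h : ReflectsTo lam S I) (hα : omega1 ≤ α)
    (hst : IsStationaryOmega (I ∩ Iio α) (S ∩ sOmega (I ∩ Iio α))) :
    ReflectsTo lam S (I ∩ Iio α) := by
  obtain ⟨hIlam, hωI, hI, -⟩ := h
  have hω : Iio omega1 ⊆ I ∩ Iio α := subset_inter hωI (Iio_subset_Iio hα)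
  refine ⟨inter_subset_left.trans hIlam, hω, le_antisymm ?_ ?_, hst⟩
  · exact hI ▸ mk_le_mk_of_subset inter_subset_left
  · exact mk_Iio_omega1 ▸ mk_le_mk_of_subset hω

theorem SSR.exists_supPlus_eq (hssr : SSR lam) (hsub : Y ⊆ sOmega (Iio lam))
    (hY : IsStationaryOmega (Iio lam) Y) :
    ∃ I ⊆ Iio lam, Iio omega1 ⊆ I ∧ #I = aleph 1 ∧
      IsStationaryOmega I {z | ∃ x ∈ Y, sqsubseteq x z ∧ supPlus x = supPlus z} := by
  obtain ⟨I, hrefl, hmin⟩ := exists_minimalFor_of_wellFoundedLT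
    (ReflectsTo lam (fullHull lam Y)) supPlus
    (hssr _ (fun _ hy => hy.1) isFull_fullHull (isStationaryOmega_fullHull hY))
  obtain ⟨hIlam, hωI, hI, hst⟩ := id hrefl
  have hbdd : BddAbove I := bddAbove_Iio.mono hIlam
  have hseg : ∀ α ∈ I ∩ Ici omega1,
      ¬IsStationaryOmega (I ∩ Iio α) (fullHull lam Y ∩ sOmega (I ∩ Iio α)) :=
    fun α hα hstα =>
      have hlt := supPlus_inter_Iio_lt hbdd hα.1
      hlt.not_ge (hmin (hrefl.inter_Iio hα.2 hstα) hlt.le)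
  refine ⟨I, hIlam, hωI, hI,
    (hst.sep_inter_notMem (fun _ _ => inter_subset_left) hseg).mono ?_⟩
  rintro z ⟨⟨⟨hzlam, x, hx, hxz⟩, hzI⟩, hz⟩ -
  refine ⟨x, hx, hxz, hxz.supPlus_eq (hbdd.mono hzI.1) fun α hα hα1 hxα => ?_⟩
  have hinter : z ∩ (I ∩ Iio α) = z ∩ Iio α := by rw [← inter_assoc, inter_eq_left.2 hzI.1]
  have hinf : (z ∩ Iio α).Infinite := (hsub hx).2.2.mono hxα.1
  have hcount : (z ∩ Iio α).Countable := hzI.2.1.mono inter_subset_left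
  have hnot := hz α ⟨hα, hzI.1 hα, hα1⟩
  rw [hinter] at hnot
  exact hnot hinf ⟨⟨⟨inter_subset_left.trans hzlam.1, hcount, hinf⟩, x, hx, hxα⟩,
    inter_subset_inter_left _ hzI.1, hcount, hinf⟩

end Reflection

section LadderSystem

variable {lam : Ordinal.{0}} {J x y : Set Ordinal.{0}} {S : Set (Set Ordinal.{0})}
  {c : Ordinal.{0} → Ordinal.{0} → Ordinal.{0}}

/-- `c` assigns to each `γ` of cofinality `ω₁` a map `c γ` from `ω₁` onto a cofinal subset of `γ`.
The values of `c` at all other arguments are irrelevant. -/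
def IsLadderSystem (c : Ordinal.{0} → Ordinal.{0} → Ordinal.{0}) : Prop :=
  ∀ γ, γ.cof = aleph 1 →
    (∀ ξ < omega1, c γ ξ < γ) ∧ ∀ α < γ, ∃ ξ < omega1, α ≤ c γ ξ

/-- `x` contains the ladder points `c γ ξ` whose indices `γ` and `ξ` belong to `x`. Below a
`LadderCofinal` set `y`, this is what turns `x ⊑ y` and `sup⁺ x = sup⁺ y` into `x ⊑* y`. -/
def LadderClosed (c : Ordinal.{0} → Ordinal.{0} → Ordinal.{0}) (x : Set Ordinal.{0}) : Prop :=
  ∀ γ ∈ x, γ.cof = aleph 1 → ∀ ξ ∈ x, ξ < omega1 → c γ ξ ∈ x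

/-- The ladder points `c γ ξ` with `ξ ∈ y ∩ ω₁` bound `y ∩ γ`, for each `γ ∈ y` of
cofinality `ω₁`. -/
def LadderCofinal (c : Ordinal.{0} → Ordinal.{0} → Ordinal.{0}) (y : Set Ordinal.{0}) : Prop :=
  ∀ γ ∈ y, γ.cof = aleph 1 → ∀ α ∈ y, α < γ → ∃ ξ ∈ y, ξ < omega1 ∧ α ≤ c γ ξ

lemma exists_isLadderSystem : ∃ c, IsLadderSystem c := by
  have h (γ : Ordinal.{0}) (hγ : γ.cof = aleph 1) : ∃ c : Ordinal.{0} → Ordinal.{0},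
      (∀ ξ < omega1, c ξ < γ) ∧ ∀ α < γ, ∃ ξ < omega1, α ≤ c ξ := by
    obtain ⟨f, hf⟩ := exists_isFundamentalSeq (congrArg Cardinal.ord hγ)
    have hext := Subtype.val_injective.extend_apply (fun ξ : Iio omega1 => (f ξ : Ordinal.{0})) 0
    refine ⟨Function.extend Subtype.val (fun ξ => f ξ) 0, fun ξ hξ => ?_, fun α hα => ?_⟩
    · exact (hext ⟨ξ, hξ⟩).trans_lt (f ⟨ξ, hξ⟩).2
    · obtain ⟨_, ⟨ξ, rfl⟩, hαξ⟩ := hf.isCofinal_range ⟨α, hα⟩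
      exact ⟨ξ, ξ.2, le_of_le_of_eq hαξ (hext ξ).symm⟩
  choose! c hc using h
  exact ⟨c, hc⟩

namespace IsLadderSystem

lemma isStationaryOmega_sep_ladderClosed (hc : IsLadderSystem c)
    (hS : IsStationaryOmega (Iio lam) S) :
    IsStationaryOmega (Iio lam) {x ∈ S | LadderClosed c x} :=
  (hS.sep_forall_mem₂ c).mono fun _ ⟨hxS, hcl⟩ hx => ⟨hxS, fun γ hγ hcof ξ hξ hξ1 =>
    hcl γ hγ ξ hξ (((hc γ hcof).1 ξ hξ1).trans (hx.1 hγ))⟩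

lemma isStationaryOmega_sep_ladderCofinal (hc : IsLadderSystem c) (hJ : Iio omega1 ⊆ J)
    (hS : IsStationaryOmega J S) : IsStationaryOmega J {y ∈ S | LadderCofinal c y} := by
  choose! g hg using fun γ hγ => (hc γ hγ).2
  refine (hS.sep_forall_mem₂ g).mono fun y ⟨hyS, hcl⟩ _ => ⟨hyS, fun γ hγ hcof α hα hαγ => ?_⟩
  obtain ⟨hgω, hαg⟩ := hg γ hcof α hαγ
  exact ⟨g γ α, hcl γ hγ α hα (hJ hgω), hgω, hαg⟩

lemma sqsubseteqStar_of_sqsubseteq (hc : IsLadderSystem c) (hx : LadderClosed c x)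
    (hy : LadderCofinal c y) (hxy : sqsubseteq x y) (hsup : supPlus x = supPlus y) :
    sqsubseteqStar lam x y := by
  refine ⟨hxy, hsup, fun γ hγ _ hcof => ?_⟩
  refine supPlus_eq_of_subset (inter_subset_inter_left _ hxy.1)
    (bddAbove_Iio.mono inter_subset_right) fun α ⟨hαy, hαγ⟩ => ?_
  obtain ⟨ξ, hξy, hξ1, hαξ⟩ := hy γ (hxy.1 hγ) hcof α hαy hαγ
  have hξx : ξ ∈ x ∩ Iio omega1 := hxy.2 ▸ ⟨hξy, hξ1⟩
  exact ⟨c γ ξ, ⟨hx γ hγ hcof ξ hξx.1 hξ1, (hc γ hcof).1 ξ hξ1⟩, hαξ⟩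

end IsLadderSystem

end LadderSystem

theorem stmt1_general (lam : Ordinal.{0}) (hssr : SSR lam)
    (X : Set (Set Ordinal)) (hsub : X ⊆ sOmega (Iio lam))
    (hwf : IsWeaklyFull lam X) (hstat : IsStationaryOmega (Iio lam) X) :
    ∃ I : Set Ordinal, I ⊆ Iio lam ∧ Iio omega1 ⊆ I ∧ #I = aleph 1 ∧
      ∀ J : Set Ordinal, J ⊆ Iio lam → I ⊆ J → supPlus J = supPlus I →
        IsStationaryOmega J (X ∩ sOmega J) := by
  obtain ⟨c, hc⟩ := exists_isLadderSystem
  obtain ⟨I, hIlam, hωI, hI, hst⟩ := hssr.exists_supPlus_eq ((sep_subset _ _).trans hsub)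
    (hc.isStationaryOmega_sep_ladderClosed hstat)
  refine ⟨I, hIlam, hωI, hI, fun J hJlam hIJ hsup => ?_⟩
  have hlift := hc.isStationaryOmega_sep_ladderCofinal (hωI.trans hIJ)
    ((hst.lift hIJ).sep_supPlus_inter_eq hIJ (bddAbove_Iio.mono hJlam) hsup)
  refine hlift.mono ?_
  rintro y ⟨⟨⟨x, ⟨hxX, hxc⟩, hxyI, hxsup⟩, hysup⟩, hyc⟩ hyJ
  have hxy : sqsubseteqStar lam x y :=
    hc.sqsubseteqStar_of_sqsubseteq hxc hyc (hxyI.of_inter hωI) (hxsup.trans hysup)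
  exact ⟨hwf x hxX y ⟨hyJ.1.trans hJlam, hyJ.2⟩ hxy, hyJ⟩

theorem stmt1 (κ : Cardinal.{0}) (hκ : aleph 2 ≤ κ) (hssr : SSR κ.ord)
    (X : Set (Set Ordinal)) (hsub : X ⊆ sOmega (Iio κ.ord))
    (hwf : IsWeaklyFull κ.ord X) (hstat : IsStationaryOmega (Iio κ.ord) X) :
    ∃ I : Set Ordinal, I ⊆ Iio κ.ord ∧ Iio omega1 ⊆ I ∧ #I = aleph 1 ∧
      ∀ J : Set Ordinal, J ⊆ Iio κ.ord → I ⊆ J → supPlus J = supPlus I →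
        IsStationaryOmega J (X ∩ sOmega J) :=
  stmt1_general κ.ord hssr X hsub hwf hstat

end
end

section
/- Let λ be a regular cardinal ≥ ω₂ and let F : [λ]^{<ω} → λ. Then Player I has a winning strategy in the game G₁(λ, F). -/
/-!
The game is closed for Player I, so by the Gale–Stewart argument it suffices to defeat each fixed
strategy `τ` of Player II, and against a known `τ` the numbers `γ n` may be chosen before the
numbers `α n`.  Take `γ 0 < γ 1 < ⋯` of cofinality `ω₁` and closed under `τ`; this is where `ω₁ < λ`
and the regularity of `λ` enter.  The closure `A` of `{γ n}` under `F` is countable, hence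
`A ∩ γ n` is bounded below `γ n`, and any bound `α n < γ n` keeps `A` out of `[α n, γ n)`.  The
answer of `τ` in round `n` depends only on ordinals below `γ n`, so it is below `γ n` as well.
-/

open Set Cardinal Ordinal

noncomputable section

/-- `y` is closed under the finitary function `F`. -/
def ClosedUnder {α : Type*} (F : Finset α → α) (y : Set α) : Prop :=
  ∀ s : Finset α, ↑s ⊆ y → F s ∈ y

/-- `cl_F(x)`: the smallest superset of `x` closed under `F`. -/
def clF {α : Type*} (F : Finset α → α) (x : Set α) : Set α :=
  ⋂₀ {y | x ⊆ y ∧ ClosedUnder F y}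

universe u

section Closure

variable {α ι : Type*} (F : Finset α → α)

lemma subset_clF (x : Set α) : x ⊆ clF F x :=
  fun _ ha _ hy => hy.1 ha

lemma closedUnder_clF (x : Set α) : ClosedUnder F (clF F x) :=
  fun s hs y hy => hy.2 s fun _ ha => hs ha y hy

variable {F}

lemma clF_subset {x y : Set α} (hxy : x ⊆ y) (hy : ClosedUnder F y) : clF F x ⊆ y :=
  fun _ ha => ha y ⟨hxy, hy⟩

variable (F)

lemma clF_mono : Monotone (clF F) :=
  fun _ y hxy => clF_subset (hxy.trans (subset_clF F y)) (closedUnder_clF F y)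

lemma clF_iUnion_of_directed [Nonempty ι] {x : ι → Set α} (hx : Directed (· ⊆ ·) x) :
    clF F (⋃ i, x i) = ⋃ i, clF F (x i) := by
  refine (clF_subset (iUnion_mono fun i => subset_clF F (x i)) fun s hs => ?_).antisymm
    (iUnion_subset fun i => clF_mono F (subset_iUnion x i))
  have hdir : Directed (· ⊆ ·) fun i => clF F (x i) :=
    fun i j => (hx i j).imp fun k hk => ⟨clF_mono F hk.1, clF_mono F hk.2⟩
  obtain ⟨i, hi⟩ := hdir.exists_mem_subset_of_finset_subset_biUnion hs
  exact mem_iUnion_of_mem i (closedUnder_clF F (x i) s hi)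

/-- One step of the construction of `clF` from below: adjoin the values of `F` at the finite
subsets of `x`. -/
def closureStep (x : Set α) : Set α :=
  x ∪ F '' {s | ↑s ⊆ x}

variable {F}

lemma closureStep_countable {x : Set α} (hx : x.Countable) : (closureStep F x).Countable := by
  have hfin : {s : Set α | s.Finite ∧ s ⊆ x}.Countable := countable_ofPred_finite_subset hx
  have hpre : {s : Finset α | ↑s ⊆ x}.Countable := by
    simpa only [preimage_ofPred_eq, Finset.finite_toSet, true_and] using
      hfin.preimage Finset.coe_injective
  exact hx.union (hpre.image F)

lemma clF_countable {x : Set α} (hx : x.Countable) : (clF F x).Countable := by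
  let stage (n : ℕ) : Set α := (closureStep F)^[n] x
  have stage_succ (n : ℕ) : stage (n + 1) = closureStep F (stage n) :=
    Function.iterate_succ_apply' _ _ _
  have stage_countable (n : ℕ) : (stage n).Countable := by
    induction n with
    | zero => exact hx
    | succ n ih => exact stage_succ n ▸ closureStep_countable ih
  have stage_mono : Monotone stage :=
    monotone_nat_of_le_succ fun n => stage_succ n ▸ subset_union_left
  refine (countable_iUnion stage_countable).mono (clF_subset (subset_iUnion stage 0) fun s hs => ?_)
  obtain ⟨n, hn⟩ := stage_mono.directed_le.exists_mem_subset_of_finset_subset_biUnion hs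
  exact mem_iUnion_of_mem (n + 1) (stage_succ n ▸ Or.inr ⟨s, hn, rfl⟩)

end Closure

section ClosurePoints

lemma exists_lt_inter_Ico_eq_empty {s : Set Ordinal.{u}} {γ : Ordinal.{u}}
    (hs : #s < Cardinal.lift.{u + 1} γ.cof) : ∃ α < γ, s ∩ Ico α γ = ∅ := by
  have hlt : #↑(s ∩ Iio γ) < (Ordinal.lift.{u + 1} γ).cof :=
    (mk_le_mk_of_subset inter_subset_left).trans_lt (lift_cof γ ▸ hs)
  refine ⟨_, sSup_add_one_lt_of_lt_cof hlt fun _ hξ => hξ.2, eq_empty_iff_forall_notMem.2 ?_⟩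
  rintro ξ ⟨hξs, hξ, hξγ⟩
  have hbdd : BddAbove ((· + 1) '' (s ∩ Iio γ)) :=
    ⟨γ, forall_mem_image.2 fun η hη => Order.add_one_le_of_lt hη.2⟩
  exact (Order.lt_add_one_iff.2 hξ).not_ge (le_csSup hbdd ⟨ξ, ⟨hξs, hξγ⟩, rfl⟩)

lemma mk_list_forall_mem_lt {α : Type*} {s : Set α} {c : Cardinal} (hc : ℵ₀ < c) (hs : #s < c) :
    #{l : List α | ∀ p ∈ l, p ∈ s} < c := by
  rw [← range_list_map_coe]
  exact mk_range_le.trans_lt ((mk_list_le_max s).trans_lt (max_lt hc hs))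

variable {κ μ : Cardinal.{u}}

lemma exists_cof_eq_forall_lt_of_monotone (hκ : κ.IsRegular) (hμ : μ.IsRegular) (hμκ : μ < κ)
    {h : Ordinal.{u} → Ordinal.{u}} (hmono : Monotone h) (hh : ∀ ε < κ.ord, h ε < κ.ord)
    {δ : Ordinal.{u}} (hδ : δ < κ.ord) :
    ∃ γ, δ < γ ∧ γ < κ.ord ∧ γ.cof = μ ∧ ∀ ε < γ, h ε < γ := by
  -- `deriv h` is a normal function even when `h` is not, hence preserves cofinalities, and each
  -- of its limit values is closed under `h`.
  have hlim : Order.IsSuccLimit (δ + μ.ord) := isSuccLimit_add δ (isSuccLimit_ord hμ.aleph0_le)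
  have hlt : δ + μ.ord < κ.ord := isPrincipal_add_ord hκ.aleph0_le hδ (ord_lt_ord.2 hμκ)
  refine ⟨deriv h (δ + μ.ord), ?_, ?_, ?_, fun ε hε => ?_⟩
  · exact (lt_add_of_pos_right δ hμ.ord_pos).trans_le (deriv_strictMono h).le_apply
  · exact deriv_lt_ord hκ (hμ.aleph0_le.trans_lt hμκ).ne' hh hlt
  · rw [cof_map_of_isNormal (isNormal_deriv h) hlim, cof_add δ hμ.ord_pos.ne', hμ.cof_ord]
  · obtain ⟨ξ, hξ, hεξ⟩ := ((isNormal_deriv h).lt_iff_exists_lt hlim).1 hε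
    calc h ε ≤ h (deriv h ξ + 1) := hmono (hεξ.le.trans le_self_add)
      _ ≤ nfp h (deriv h ξ + 1) := iterate_le_nfp h _ 1
      _ = deriv h (ξ + 1) := (deriv_add_one h ξ).symm
      _ < deriv h (δ + μ.ord) := deriv_strictMono h (hlim.add_one_lt hξ)

/-- `γ` is closed under the strategy `f` of Player II: as long as all ordinals played by Player I
are below `γ`, so is the answer.  The list holds the pairs `(α i, γ i)` of the completed rounds and
the second argument is the first move of the current round. -/
def IsClosurePoint (f : List (Ordinal.{u} × Ordinal.{u}) → Ordinal.{u} → Ordinal.{u})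
    (γ : Ordinal.{u}) : Prop :=
  ∀ l a, (∀ p ∈ l, p.1 < γ ∧ p.2 < γ) → a < γ → f l a < γ

variable {f : List (Ordinal.{u} × Ordinal.{u}) → Ordinal.{u} → Ordinal.{u}}

/-- The answers of the strategy `f` of Player II to moves of Player I that are at most `ε`. -/
def answersUpTo (f : List (Ordinal.{u} × Ordinal.{u}) → Ordinal.{u} → Ordinal.{u})
    (ε : Ordinal.{u}) : Set Ordinal.{u} :=
  image2 f {l | ∀ p ∈ l, p ∈ Iic ε ×ˢ Iic ε} (Iic ε)

lemma answersUpTo_mono : Monotone (answersUpTo f) := fun _ _ h =>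
  image2_subset (fun _ hl p hp => ⟨(hl p hp).1.trans h, (hl p hp).2.trans h⟩) (Iic_subset_Iic.2 h)

lemma mk_answersUpTo_lt (hκ : ℵ₀ < κ) {ε : Ordinal.{u}} (hε : ε < κ.ord) :
    #(answersUpTo f ε) < Cardinal.lift.{u + 1} κ := by
  have hlift : ℵ₀ < Cardinal.lift.{u + 1} κ := aleph0_lt_lift.2 hκ
  have hIic : #(Iic ε) < Cardinal.lift.{u + 1} κ := by
    rw [← Order.Iio_succ, Cardinal.mk_Iio_ordinal, Cardinal.lift_lt, ← lt_ord]
    exact (isSuccLimit_ord hκ.le).succ_lt hε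
  have hprod : #(Iic ε ×ˢ Iic ε : Set _) < Cardinal.lift.{u + 1} κ := by
    rw [mk_setProd]
    exact mul_lt_of_lt hlift.le hIic hIic
  exact mk_image2_le.trans_lt (mul_lt_of_lt hlift.le (mk_list_forall_mem_lt hlift hprod) hIic)

lemma exists_lt_mem_answersUpTo {γ : Ordinal.{u}} {l : List (Ordinal.{u} × Ordinal.{u})}
    {a : Ordinal.{u}} (hl : ∀ p ∈ l, p.1 < γ ∧ p.2 < γ) (ha : a < γ) :
    ∃ ε < γ, f l a ∈ answersUpTo f ε := by
  let s : Set Ordinal.{u} := insert a ((Prod.fst '' {p | p ∈ l}) ∪ Prod.snd '' {p | p ∈ l})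
  have hs : s.Finite := ((l.finite_toSet.image _).union (l.finite_toSet.image _)).insert a
  have hsγ : ∀ ξ ∈ s, ξ < γ := by
    rintro ξ (rfl | ⟨p, hp, rfl⟩ | ⟨p, hp, rfl⟩)
    exacts [ha, (hl p hp).1, (hl p hp).2]
  obtain ⟨ε, hεs, hε⟩ := s.exists_max_image id hs (insert_nonempty _ _)
  exact ⟨ε, hsγ ε hεs, l, fun p hp => ⟨hε _ (.inr (.inl ⟨p, hp, rfl⟩)),
    hε _ (.inr (.inr ⟨p, hp, rfl⟩))⟩, a, hε a (.inl rfl), rfl⟩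

lemma exists_isClosurePoint (hκ : κ.IsRegular) (hμ : μ.IsRegular) (hμκ : μ < κ)
    (hf : ∀ l a, f l a < κ.ord) {δ : Ordinal.{u}} (hδ : δ < κ.ord) :
    ∃ γ, δ < γ ∧ γ < κ.ord ∧ γ.cof = μ ∧ IsClosurePoint f γ := by
  have hmem {ε ξ : Ordinal.{u}} (hξ : ξ ∈ answersUpTo f ε) : ξ < κ.ord := by
    obtain ⟨l, -, a, -, rfl⟩ := hξ
    exact hf l a
  have hbdd (ε : Ordinal.{u}) : BddAbove (answersUpTo f ε) := ⟨κ.ord, fun _ hξ => (hmem hξ).le⟩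
  have hmono : Monotone fun ε => sSup (answersUpTo f ε) :=
    fun _ _ h => csSup_le_csSup' (hbdd _) (answersUpTo_mono h)
  have hlt (ε : Ordinal.{u}) (hε : ε < κ.ord) : sSup (answersUpTo f ε) < κ.ord := by
    refine sSup_lt_of_lt_cof ?_ fun _ hξ => hmem hξ
    rw [← lift_cof, hκ.cof_ord]
    exact mk_answersUpTo_lt (hμ.aleph0_le.trans_lt hμκ) hε
  obtain ⟨γ, hδγ, hγκ, hγμ, hγ⟩ := exists_cof_eq_forall_lt_of_monotone hκ hμ hμκ hmono hlt hδ
  refine ⟨γ, hδγ, hγκ, hγμ, fun l a hl ha => ?_⟩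
  obtain ⟨ε, hεγ, hε⟩ := exists_lt_mem_answersUpTo hl ha
  exact (le_csSup (hbdd ε) hε).trans_lt (hγ ε hεγ)

lemma exists_strictMono_isClosurePoint (hκ : κ.IsRegular) (hμ : μ.IsRegular) (hμκ : μ < κ)
    (hf : ∀ l a, f l a < κ.ord) :
    ∃ γ : ℕ → Ordinal.{u}, StrictMono γ ∧
      ∀ n, γ n < κ.ord ∧ (γ n).cof = μ ∧ IsClosurePoint f (γ n) := by
  let S : Set Ordinal.{u} := {γ | γ < κ.ord ∧ γ.cof = μ ∧ IsClosurePoint f γ}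
  have hS {δ : Ordinal.{u}} (hδ : δ < κ.ord) : ∃ γ : S, δ < γ := by
    obtain ⟨γ, hδγ, hγ⟩ := exists_isClosurePoint hκ hμ hμκ hf hδ
    exact ⟨⟨γ, hγ⟩, hδγ⟩
  have : Nonempty S := (hS hκ.ord_pos).nonempty
  have : NoMaxOrder S := ⟨fun γ => hS γ.2.1⟩
  obtain ⟨γ, hγ⟩ := Nat.exists_strictMono S
  exact ⟨fun n => γ n, hγ, fun n => (γ n).2⟩

end ClosurePoints

section ClosedGame

open Stream'

variable {A B C : Type*}

/-- Player II has a winning strategy from the position `q` in the game in which the players choose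
`a`, `b`, `c` with `R a b c` in each round, Player I choosing `a` and `c` and aiming at a run in
`W`.  Positions and runs only record the moves of Player I, and the strategy `τ` only looks at the
rounds played after `q`. -/
def SecondWins (R : A → B → C → Prop) (W : Set (Stream' (A × C))) (q : List (A × C)) : Prop :=
  ∃ τ : List (A × C) → A → B, ∀ y : Stream' (A × C),
    (∀ n, R (y.get n).1 (τ (y.take n) (y.get n).1) (y.get n).2) → q ++ₛ y ∉ W

/-- `W` is closed in the product of discrete topologies: a run all of whose finite initial segments
extend to runs in `W` is itself in `W`. -/
def IsClosedPayoff {M : Type*} (W : Set (Stream' M)) : Prop :=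
  ∀ x : Stream' M, (∀ n, ∃ y, x.take n ++ₛ y ∈ W) → x ∈ W

variable {R : A → B → C → Prop} {W : Set (Stream' (A × C))} {q : List (A × C)}

lemma exists_append_mem_of_not_secondWins [Nonempty B] (h : ¬ SecondWins R W q) :
    ∃ y, q ++ₛ y ∈ W := by
  by_contra! hq
  exact h ⟨fun _ _ => Classical.arbitrary B, fun y _ => hq y⟩

lemma exists_not_secondWins_append (h : ¬ SecondWins R W q) :
    ∃ a, ∀ b, ∃ c, R a b c ∧ ¬ SecondWins R W (q ++ [(a, c)]) := by
  by_contra! hq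
  choose b hb using hq
  have hτ (p : A × C) : ∃ τ : List (A × C) → A → B, R p.1 (b p.1) p.2 → ∀ y : Stream' (A × C),
      (∀ n, R (y.get n).1 (τ (y.take n) (y.get n).1) (y.get n).2) → q ++ [p] ++ₛ y ∉ W := by
    by_cases hp : R p.1 (b p.1) p.2
    · exact (hb p.1 p.2 hp).imp fun _ hτ _ => hτ
    · exact ⟨fun _ => b, fun h => absurd h hp⟩
  choose τ hτ using hτ
  -- If Player II can answer every `a` by some `b a` that leaves only winning positions, then `b`
  -- followed by the strategies `τ p` from these positions wins from `q`.
  refine h ⟨fun l a => l.casesOn (b a) fun p l => τ p l a, fun y hy => ?_⟩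
  have hmem := hτ y.head (hy 0) y.tail fun n => hy (n + 1)
  rwa [append_append_stream, append_stream_head_tail] at hmem

theorem exists_strategy_of_not_secondWins [Nonempty B] (hW : IsClosedPayoff W)
    (h : ¬ SecondWins R W []) :
    ∃ (sA : List B → A) (sC : List B → B → C), ∀ (b : Stream' B) (x : Stream' (A × C)),
      (∀ n, x.get n = (sA (b.take n), sC (b.take n) (b.get n))) →
        (∀ n, R (x.get n).1 (b.get n) (x.get n).2) ∧ x ∈ W := by
  have hstep (q : List (A × C)) (hq : ¬ SecondWins R W q) := exists_not_secondWins_append hq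
  obtain ⟨a, ha⟩ := hstep [] h
  obtain ⟨c, -⟩ := ha (Classical.arbitrary B)
  have : Nonempty A := ⟨a⟩
  have : Nonempty C := ⟨c⟩
  choose! f g hR hlive using hstep
  let pos (l : List B) : List (A × C) := l.foldl (fun q b => q ++ [(f q, g q b)]) []
  refine ⟨fun l => f (pos l), fun l => g (pos l), fun b x hx => ?_⟩
  dsimp only at hx
  have hpos (n : ℕ) : pos (b.take n) = x.take n := by
    induction n with
    | zero => rfl
    | succ n ih => rw [take_succ', take_succ', hx, ← ih]; simp only [pos, List.foldl_concat]
  have hxlive (n : ℕ) : ¬ SecondWins R W (x.take n) := by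
    induction n with
    | zero => exact h
    | succ n ih => rw [take_succ', hx, hpos]; exact hlive _ ih _
  refine ⟨fun n => ?_, hW x fun n => exists_append_mem_of_not_secondWins (hxlive n)⟩
  rw [hx, hpos]
  exact hR _ (hxlive n) _

lemma ofFn_get_eq_take {M : Type*} (x : Stream' M) (n : ℕ) :
    (List.ofFn fun i : Fin n => x.get i) = x.take n :=
  List.ext_getElem (by rw [List.length_ofFn, length_take]) fun i _ _ => by
    rw [List.getElem_ofFn, take_get]

theorem exists_ofFn_strategy_of_not_secondWins {s : Set B} {R : A → s → C → Prop} (hs : s.Nonempty)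
    (hW : IsClosedPayoff W) (h : ¬ SecondWins R W []) :
    ∃ (sA : List B → A) (sC : List B → C),
      ∀ (β : ℕ → B) (hβ : ∀ n, β n ∈ s) (α : ℕ → A) (γ : ℕ → C),
      (∀ n, α n = sA (List.ofFn fun i : Fin n => β i)) →
      (∀ n, γ n = sC (List.ofFn fun i : Fin (n + 1) => β i)) →
        (∀ n, R (α n) ⟨β n, hβ n⟩ (γ n)) ∧ (fun n => (α n, γ n)) ∈ W := by
  have : Nonempty s := hs.to_subtype
  obtain ⟨sA, sC, hwin⟩ := exists_strategy_of_not_secondWins hW h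
  let toMove : B → s := Function.invFun Subtype.val
  refine ⟨fun l => sA (l.map toMove),
    fun l => sC (l.dropLast.map toMove) (toMove (l.getLastD hs.some)), fun β hβ α γ hα hγ => ?_⟩
  let b : Stream' s := fun n => ⟨β n, hβ n⟩
  have hmove (n : ℕ) : toMove (β n) = b.get n :=
    Function.leftInverse_invFun Subtype.val_injective (b.get n)
  have hmap (n : ℕ) : (List.ofFn fun i : Fin n => β i).map toMove = b.take n := by
    rw [List.map_ofFn, ← ofFn_get_eq_take]
    exact congrArg List.ofFn (funext fun i => hmove i)
  refine hwin b (fun n => (α n, γ n)) fun n => Prod.ext ?_ ?_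
  · exact (hα n).trans (congrArg sA (hmap n))
  · refine (hγ n).trans ?_
    dsimp only
    rw [List.ofFn_succ_last, List.dropLast_concat, List.getLastD_concat]
    exact congrArg₂ sC (hmap n) (hmove n)

end ClosedGame

section Game

variable {κ μ : Cardinal.{u}} {F : Finset Ordinal.{u} → Ordinal.{u}}

/-- The rules of a round `α`, `β`, `γ` of the game `G₁(λ, F)` with `λ = κ.ord`, where the
cofinality required of `γ` is an arbitrary cardinal `μ` in place of `ω₁`. -/
def IsLegalRound (κ μ : Cardinal.{u}) (α : Ordinal.{u}) (β : Iio κ.ord) (γ : Ordinal.{u}) : Prop :=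
  α < κ.ord ∧ γ < κ.ord ∧ α < γ ∧ β < γ ∧ γ.cof = μ

/-- The winning condition of Player I in `G₁(λ, F)`, as a set of sequences of pairs
`(α n, γ n)`. -/
def winningRuns (F : Finset Ordinal.{u} → Ordinal.{u}) :
    Set (Stream' (Ordinal.{u} × Ordinal.{u})) :=
  {x | ∀ m, clF F (range fun n => (x.get n).2) ∩ Ico (x.get m).1 (x.get m).2 = ∅}

lemma isClosedPayoff_winningRuns : IsClosedPayoff (winningRuns F) := by
  refine fun x hx m => eq_empty_iff_forall_notMem.2 ?_
  rintro ξ ⟨hξ, hξm⟩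
  let initial (n : ℕ) : Set Ordinal.{u} := (fun i => (x.get i).2) '' Iio n
  have hmono : Monotone initial := fun _ _ h => image_mono (Iio_subset_Iio h)
  have hrange : range (fun i => (x.get i).2) = ⋃ n, initial n := by
    rw [← image_iUnion, iUnion_Iio, image_univ]
  rw [hrange, clF_iUnion_of_directed F hmono.directed_le, mem_iUnion] at hξ
  obtain ⟨n, hn⟩ := hξ
  obtain ⟨y, hy⟩ := hx (max n (m + 1))
  have hget {i : ℕ} (hi : i < max n (m + 1)) :
      (x.take (max n (m + 1)) ++ₛ y).get i = x.get i := by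
    rw [Stream'.get_append_left _ _ _ (by rwa [Stream'.length_take]), Stream'.take_get]
  have hsub : initial n ⊆ range fun i => ((x.take (max n (m + 1)) ++ₛ y).get i).2 :=
    image_subset_iff.2 fun i hi =>
      ⟨i, congrArg Prod.snd (hget ((mem_Iio.1 hi).trans_le (le_max_left n (m + 1))))⟩
  have hm := hy m
  rw [hget (le_max_right n (m + 1))] at hm
  exact (eq_empty_iff_forall_notMem.1 hm) ξ ⟨clF_mono F hsub hn, hξm⟩

lemma not_secondWins_winningRuns (hκ : κ.IsRegular) (hμ : μ.IsRegular) (hμ₀ : ℵ₀ < μ)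
    (hμκ : μ < κ) : ¬ SecondWins (IsLegalRound κ μ) (winningRuns F) [] := by
  rintro ⟨τ, hτ⟩
  obtain ⟨γ, hγmono, hγ⟩ := exists_strictMono_isClosurePoint hκ hμ hμκ fun l a => (τ l a).2
  have hα (n : ℕ) : ∃ α < γ n, clF F (range γ) ∩ Ico α (γ n) = ∅ := by
    refine exists_lt_inter_Ico_eq_empty ?_
    rw [(hγ n).2.1]
    exact (clF_countable (countable_range γ)).le_aleph0.trans_lt (aleph0_lt_lift.2 hμ₀)
  choose α hαγ hα using hα
  let x : Stream' (Ordinal.{u} × Ordinal.{u}) := fun n => (α n, γ n)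
  refine hτ x (fun n => ?_) hα
  have hpast : ∀ p ∈ x.take n, p.1 < γ n ∧ p.2 < γ n := by
    rw [← ofFn_get_eq_take, List.forall_mem_ofFn_iff]
    exact fun i => ⟨(hαγ i).trans (hγmono i.2), hγmono i.2⟩
  exact ⟨(hαγ n).trans (hγ n).1, (hγ n).1, hαγ n, (hγ n).2.2 _ _ hpast (hαγ n), (hγ n).2.1⟩

end Game

theorem stmt2_general {κ μ : Cardinal.{u}} (hκ : κ.IsRegular) (hμ : μ.IsRegular) (hμ₀ : ℵ₀ < μ)
    (hμκ : μ < κ) (F : Finset Ordinal.{u} → Ordinal.{u}) :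
    ∃ sA sC : List Ordinal.{u} → Ordinal.{u},
      ∀ β : ℕ → Ordinal.{u}, (∀ n, β n < κ.ord) →
        ∀ α γ : ℕ → Ordinal.{u},
          (∀ n, α n = sA (List.ofFn fun i : Fin n => β i)) →
          (∀ n, γ n = sC (List.ofFn fun i : Fin (n + 1) => β i)) →
          (∀ n, α n < κ.ord ∧ γ n < κ.ord ∧ α n < γ n ∧ β n < γ n ∧ (γ n).cof = μ) ∧
          ∀ m, clF F (Set.range γ) ∩ Ico (α m) (γ m) = ∅ := by
  have hlive := not_secondWins_winningRuns (F := F) hκ hμ hμ₀ hμκ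
  exact exists_ofFn_strategy_of_not_secondWins ⟨0, hκ.ord_pos⟩ isClosedPayoff_winningRuns hlive

/-- In the game `G₁(λ, F)`, at round `n` Player I plays `α n`, Player II answers with
`β n < λ`, and Player I then plays `γ n`.  A strategy for Player I is coded by a pair of
functions `sA sC : List Ordinal → Ordinal` producing `α n` from `⟨β 0, …, β (n-1)⟩` and
`γ n` from `⟨β 0, …, β n⟩`.  The theorem asserts that Player I has a winning strategy:
against every sequence of legal moves of II, I's moves are legal
(`α n < λ`, `α n, β n < γ n < λ`, `cof (γ n) = ω₁`) and
`cl_F({γ n : n < ω}) ∩ [α m, γ m) = ∅` for every `m`. -/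
theorem stmt2 (κ : Cardinal.{0}) (hreg : κ.IsRegular) (hκ : aleph 2 ≤ κ)
    (F : Finset Ordinal → Ordinal)
    (hF : ∀ s : Finset Ordinal, ↑s ⊆ Iio κ.ord → F s < κ.ord) :
    ∃ sA sC : List Ordinal → Ordinal,
      ∀ β : ℕ → Ordinal, (∀ n, β n < κ.ord) →
        ∀ α γ : ℕ → Ordinal,
          (∀ n, α n = sA (List.ofFn fun i : Fin n => β i)) →
          (∀ n, γ n = sC (List.ofFn fun i : Fin (n + 1) => β i)) →
          (∀ n, α n < κ.ord ∧ γ n < κ.ord ∧ α n < γ n ∧ β n < γ n ∧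
            (γ n).cof = aleph 1) ∧
          ∀ m, clF F (Set.range γ) ∩ Ico (α m) (γ m) = ∅ := by
  have h₁₂ : aleph 1 < aleph 2 := aleph_lt_aleph.2 (by norm_num)
  exact stmt2_general hreg isRegular_aleph_one aleph0_lt_aleph_one (h₁₂.trans_le hκ) F

end
end
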